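/- arXiv:1708.05363 — 2 statements merged into one kernel-verified Lean document; each statement's English description precedes it below -/
import Mathlib

section
/- Let N ≥ 1 and consider cells k = 1, …, N with interfaces indexed k + 1/2 for k = 0, …, N. At each interface suppose given real numbers A⁻, A⁺ ≥ 0, u⁻, u⁺, and c⁻, c⁺ ≥ 0, with one-sided local speeds a⁺ = max{0, u⁺ + c⁺, u⁻ + c⁻} and a⁻ = min{0, u⁺ − c⁺, u⁻ − c⁻} satisfying a⁺ − a⁻ > 0, and define the central-upwind mass flux H = (a⁺ u⁻A⁻ − a⁻ u⁺A⁺)/(a⁺ − a⁻) + a⁺a⁻(A⁺ − A⁻)/(a⁺ − a⁻). For each cell k let Δx_k > 0 and Ā_k ≥ 0. If Δt ≥ 0 satisfies, for every k, Δt·(a⁺_{k−1/2} − a⁻_{k+1/2}) ≤ Δx_k and Δt·(a⁺_{k+1/2} A⁻_{k+1/2} − a⁻_{k−1/2} A⁺_{k−1/2}) ≤ Δx_k Ā_k, then for every k the forward-Euler update Ā_k^{new} = Ā_k − (Δt/Δx_k)(H_{k+1/2} − H_{k−1/2}) satisfies Ā_k^{new} ≥ 0. -/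
/-!
Collecting the terms in `A⁻` and in `A⁺` gives
`(a⁺ - a⁻) H = a⁺ (u⁻ - a⁻) A⁻ + a⁻ (a⁺ - u⁺) A⁺`.
If `a⁻ ≤ 0 ≤ a⁺` and both velocities lie in `[a⁻, a⁺]`, then the first summand lies in
`[0, (a⁺ - a⁻) a⁺ A⁻]` and the second in `[(a⁺ - a⁻) a⁻ A⁺, 0]`, so `a⁻ A⁺ ≤ H ≤ a⁺ A⁻`. Hence in
one time step at most `Δt (a⁺ A⁻ - a⁻ A⁺)`, with `a⁺ A⁻` taken at the right and `a⁻ A⁺` at the left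
interface, leaves a cell, and the draining restriction bounds this by its content `Δx Ā`.
-/

section CentralUpwind

variable {K : Type*} [Field K]

/-- The central-upwind mass flux `H` through an interface, for one-sided local speeds `a⁺`, `a⁻`,
left/right velocities `u⁻`, `u⁺` and left/right wetted areas `A⁻`, `A⁺`. In variable names `p`
stands for the superscript `+` and `m` for `-`. Only meaningful if `a⁺ ≠ a⁻`; otherwise division
by zero makes it `0`. -/
def centralUpwindFlux (ap am um up Am Ap : K) : K :=
  (ap * um * Am - am * up * Ap) / (ap - am) + ap * am * (Ap - Am) / (ap - am)

/-- One forward-Euler step of size `Δt` for the average `a` over a cell of length `Δx`, with fluxes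
`Hl` and `Hr` through its left and right interfaces, both counted positive to the right. -/
def forwardEulerUpdate (Δt Δx a Hl Hr : K) : K :=
  a - Δt / Δx * (Hr - Hl)

theorem centralUpwindFlux_eq_div (ap am um up Am Ap : K) :
    centralUpwindFlux ap am um up Am Ap =
      (ap * (um - am) * Am + am * (ap - up) * Ap) / (ap - am) := by
  rw [centralUpwindFlux, ← add_div]
  ring

-- The mirror image `x ↦ -x` turns the upper bound on the flux into the lower one.
theorem centralUpwindFlux_reflect (ap am um up Am Ap : K) :
    centralUpwindFlux (-am) (-ap) (-up) (-um) Ap Am = -centralUpwindFlux ap am um up Am Ap := by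
  have width : -am - -ap = ap - am := by ring
  rw [centralUpwindFlux_eq_div, centralUpwindFlux_eq_div, width, ← neg_div]
  ring

variable [LinearOrder K] [IsStrictOrderedRing K]

theorem centralUpwindFlux_le {ap am um up Am Ap : K} (ham : am ≤ 0) (hap : 0 ≤ ap)
    (hum : um ≤ ap) (hup : up ≤ ap) (hAm : 0 ≤ Am) (hAp : 0 ≤ Ap) (hpos : 0 < ap - am) :
    centralUpwindFlux ap am um up Am Ap ≤ ap * Am := by
  have left_term : ap * (um - am) * Am ≤ ap * (ap - am) * Am := by gcongr
  have right_term : am * (ap - up) * Ap ≤ 0 :=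
    mul_nonpos_of_nonpos_of_nonneg
      (mul_nonpos_of_nonpos_of_nonneg ham (sub_nonneg.2 hup)) hAp
  rw [centralUpwindFlux_eq_div, div_le_iff₀ hpos]
  linarith

theorem le_centralUpwindFlux {ap am um up Am Ap : K} (ham : am ≤ 0) (hap : 0 ≤ ap)
    (hum : am ≤ um) (hup : am ≤ up) (hAm : 0 ≤ Am) (hAp : 0 ≤ Ap) (hpos : 0 < ap - am) :
    am * Ap ≤ centralUpwindFlux ap am um up Am Ap := by
  have reflected : centralUpwindFlux (-am) (-ap) (-up) (-um) Ap Am ≤ -am * Ap :=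
    centralUpwindFlux_le (neg_nonpos.2 hap) (neg_nonneg.2 ham) (neg_le_neg hup) (neg_le_neg hum)
      hAp hAm (by linarith)
  rw [centralUpwindFlux_reflect, neg_mul] at reflected
  exact neg_le_neg_iff.1 reflected

theorem forwardEulerUpdate_nonneg {Δt Δx a Hl Hr bl br : K} (hΔt : 0 ≤ Δt) (hΔx : 0 < Δx)
    (hl : bl ≤ Hl) (hr : Hr ≤ br) (hdrain : Δt * (br - bl) ≤ Δx * a) :
    0 ≤ forwardEulerUpdate Δt Δx a Hl Hr := by
  rw [forwardEulerUpdate, sub_nonneg, div_mul_eq_mul_div, div_le_iff₀' hΔx]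
  calc Δt * (Hr - Hl) ≤ Δt * (br - bl) := by gcongr
    _ ≤ Δx * a := hdrain

theorem max_velocity_le_max_add_celerity {um up cm cp : K} (hcm : 0 ≤ cm) (hcp : 0 ≤ cp) :
    max 0 (max up um) ≤ max 0 (max (up + cp) (um + cm)) := by
  gcongr <;> simpa

theorem min_sub_celerity_le_min_velocity {um up cm cp : K} (hcm : 0 ≤ cm) (hcp : 0 ≤ cp) :
    min 0 (min (up - cp) (um - cm)) ≤ min 0 (min up um) := by
  gcongr <;> simpa

theorem stmt1_general {ι J : Type*} (left right : ι → J) {Am Ap um up ap am H : J → K}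
    (hAm : ∀ m, 0 ≤ Am m) (hAp : ∀ m, 0 ≤ Ap m)
    (hap : ∀ m, max 0 (max (up m) (um m)) ≤ ap m)
    (ham : ∀ m, am m ≤ min 0 (min (up m) (um m)))
    (hpos : ∀ m, 0 < ap m - am m)
    (hH : ∀ m, H m = centralUpwindFlux (ap m) (am m) (um m) (up m) (Am m) (Ap m))
    {Δx Abar : ι → K} (hΔx : ∀ k, 0 < Δx k) {Δt : K} (hΔt : 0 ≤ Δt)
    (hdrain : ∀ k,
      Δt * (ap (right k) * Am (right k) - am (left k) * Ap (left k)) ≤ Δx k * Abar k) (k : ι) :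
    0 ≤ forwardEulerUpdate Δt (Δx k) (Abar k) (H (left k)) (H (right k)) := by
  simp only [max_le_iff] at hap
  simp only [le_min_iff] at ham
  have flux_le (m : J) : H m ≤ ap m * Am m :=
    (hH m).trans_le <| centralUpwindFlux_le (ham m).1 (hap m).1 (hap m).2.2 (hap m).2.1
      (hAm m) (hAp m) (hpos m)
  have le_flux (m : J) : am m * Ap m ≤ H m :=
    (le_centralUpwindFlux (ham m).1 (hap m).1 (ham m).2.2 (ham m).2.1
      (hAm m) (hAp m) (hpos m)).trans_eq (hH m).symm
  exact forwardEulerUpdate_nonneg hΔt (hΔx k) (le_flux (left k)) (flux_le (right k)) (hdrain k)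

end CentralUpwind

/-- Channel-cell part of the positivity-preserving theorem for the central-upwind scheme:
under the CFL-type restrictions `Δt (a⁺_{k-1/2} - a⁻_{k+1/2}) ≤ Δx_k` and
`Δt (a⁺_{k+1/2} A⁻_{k+1/2} - a⁻_{k-1/2} A⁺_{k-1/2}) ≤ Δx_k Ā_k`, the forward-Euler
update of the cell-averaged wetted area stays nonnegative. Interfaces `k ∓ 1/2` of cell
`k : Fin N` are `k.castSucc` and `k.succ` in `Fin (N+1)`. -/
theorem stmt1 (N : ℕ) (hN : 1 ≤ N)
    (Am Ap um up cm cp ap am H : Fin (N + 1) → ℝ)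
    (hAm : ∀ m, 0 ≤ Am m) (hAp : ∀ m, 0 ≤ Ap m)
    (hcm : ∀ m, 0 ≤ cm m) (hcp : ∀ m, 0 ≤ cp m)
    (hap : ∀ m, ap m = max 0 (max (up m + cp m) (um m + cm m)))
    (ham : ∀ m, am m = min 0 (min (up m - cp m) (um m - cm m)))
    (hpos : ∀ m, 0 < ap m - am m)
    (hH : ∀ m, H m = (ap m * um m * Am m - am m * up m * Ap m) / (ap m - am m)
        + ap m * am m * (Ap m - Am m) / (ap m - am m))
    (Δx Abar : Fin N → ℝ)
    (hΔx : ∀ k, 0 < Δx k) (hAbar : ∀ k, 0 ≤ Abar k)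
    (Δt : ℝ) (hΔt : 0 ≤ Δt)
    (hCFL1 : ∀ k : Fin N, Δt * (ap k.castSucc - am k.succ) ≤ Δx k)
    (hCFL2 : ∀ k : Fin N,
      Δt * (ap k.succ * Am k.succ - am k.castSucc * Ap k.castSucc) ≤ Δx k * Abar k) :
    ∀ k : Fin N, 0 ≤ Abar k - Δt / Δx k * (H k.succ - H k.castSucc) := by
  exact stmt1_general Fin.castSucc Fin.succ hAm hAp
    (fun m => (max_velocity_le_max_add_celerity (hcm m) (hcp m)).trans_eq (hap m).symm)
    (fun m => (ham m).trans_le (min_sub_celerity_le_min_velocity (hcm m) (hcp m)))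
    hpos hH hΔx hΔt hCFL2
end

section
/- Let Ā ≥ 0, Δx > 0, let H₊ and H₋ be real numbers (the mass fluxes through the right and left faces of a cell), and let Δt₊, Δt₋ ≥ 0 be interface time steps. Define the draining time Δt^{drain} = Δx·Ā / (max(0, H₊) + max(0, −H₋)) whenever max(0, H₊) + max(0, −H₋) > 0. Assume that Δt₊ ≤ Δt^{drain} whenever H₊ > 0 and Δt₋ ≤ Δt^{drain} whenever H₋ < 0. Then the draining-time update Ā^{new} = Ā − (Δt₊·H₊ − Δt₋·H₋)/Δx satisfies Ā^{new} ≥ 0. -/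
/-! The draining time is the uniform time step at which the outflow alone would empty the cell.
Stopping the outgoing fluxes at or before that time removes at most the water that is present,
while the inflow through the remaining faces only adds to it. Hence the argument applies to a cell
with any finite set of faces; an interval is the case of two faces, with outward fluxes `H₊` and
`-H₋`. -/

theorem mul_le_mul_max_zero {R : Type*} [MulZeroClass R] [LinearOrder R] [PosMulMono R]
    [MulPosMono R] {a b x : R} (ha : 0 ≤ a) (hab : 0 < x → a ≤ b) : a * x ≤ b * max 0 x := by
  rcases lt_or_ge 0 x with hx | hx
  · rw [max_eq_right hx.le]
    exact mul_le_mul_of_nonneg_right (hab hx) hx.le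
  · rw [max_eq_left hx, mul_zero]
    exact mul_nonpos_of_nonneg_of_nonpos ha hx

section DrainingTime

variable {ι K : Type*} [Field K] [LinearOrder K]

/-- The total rate of outflow from a cell with set of faces `s`, where `F i` is the flux through the
face `i`, counted positively when it leaves the cell. -/
def outflow (s : Finset ι) (F : ι → K) : K :=
  ∑ i ∈ s, max 0 (F i)

/-- The draining time of a cell containing the volume `V` of water: the time in which this volume
would leave the cell at the rate `outflow s F`. It has the junk value `0` when there is no
outflow. -/
def drainingTime (s : Finset ι) (F : ι → K) (V : K) : K :=
  V / outflow s F

variable [IsStrictOrderedRing K] {s : Finset ι} {F τ : ι → K} {V : K}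

theorem drainingTime_mul_outflow_le (hV : 0 ≤ V) : drainingTime s F V * outflow s F ≤ V := by
  rw [drainingTime, div_mul_eq_mul_div, mul_div_assoc]
  exact mul_le_of_le_one_right hV (div_self_le_one _)

theorem sum_mul_flux_le_of_le_drainingTime (hV : 0 ≤ V) (hτ : ∀ i ∈ s, 0 ≤ τ i)
    (hdrain : ∀ i ∈ s, 0 < F i → τ i ≤ drainingTime s F V) : ∑ i ∈ s, τ i * F i ≤ V :=
  calc ∑ i ∈ s, τ i * F i
      ≤ ∑ i ∈ s, drainingTime s F V * max 0 (F i) :=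
        Finset.sum_le_sum fun i hi => mul_le_mul_max_zero (hτ i hi) (hdrain i hi)
    _ = drainingTime s F V * outflow s F := (Finset.mul_sum ..).symm
    _ ≤ V := drainingTime_mul_outflow_le hV

theorem stmt3_general {A μ : K} (hA : 0 ≤ A) (hμ : 0 < μ) (hτ : ∀ i ∈ s, 0 ≤ τ i)
    (hdrain : ∀ i ∈ s, 0 < F i → τ i ≤ drainingTime s F (μ * A)) :
    0 ≤ A - (∑ i ∈ s, τ i * F i) / μ := by
  rw [sub_nonneg, div_le_iff₀' hμ]
  exact sum_mul_flux_le_of_le_drainingTime (mul_nonneg hμ.le hA) hτ hdrain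

end DrainingTime

/-- Draining-time update preserves nonnegativity of the cell-averaged wetted area: with
draining time `Δt^drain = Δx Ā / (max 0 H₊ + max 0 (-H₋))` (defined whenever the
denominator is positive), if `Δt₊ ≤ Δt^drain` whenever `H₊ > 0` and `Δt₋ ≤ Δt^drain`
whenever `H₋ < 0`, then `Ā - (Δt₊ H₊ - Δt₋ H₋)/Δx ≥ 0`. -/
theorem stmt3 (Abar Δx Hp Hm Δtp Δtm : ℝ)
    (hA : 0 ≤ Abar) (hΔx : 0 < Δx) (htp : 0 ≤ Δtp) (htm : 0 ≤ Δtm)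
    (hdp : 0 < Hp → Δtp ≤ Δx * Abar / (max 0 Hp + max 0 (-Hm)))
    (hdm : Hm < 0 → Δtm ≤ Δx * Abar / (max 0 Hp + max 0 (-Hm))) :
    0 ≤ Abar - (Δtp * Hp - Δtm * Hm) / Δx := by
  simpa [Fin.sum_univ_two, sub_eq_add_neg] using
    stmt3_general (s := Finset.univ) (F := ![Hp, -Hm]) (τ := ![Δtp, Δtm]) hA hΔx
      (by simp [htp, htm]) (by simpa [drainingTime, outflow] using ⟨hdp, hdm⟩)
end
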